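/- Let {H_iα_i}_{i=1}^{s} be a coset partition of F_n (n ≥ 1) with indices 1 < d_1 ≤ … ≤ d_s, and let h_i be the period of the transition matrix A_i of H_i. Let h > 1 be such that either h = max{h_i : 1 ≤ i ≤ s}, or h = h_ℓ for some ℓ and h does not properly divide any other period h_i. Let J = { j : 1 ≤ j ≤ s, h_j = h } and let k ∈ J be such that d_k = max{ d_j : j ∈ J }. If the period of A_k equals d_k (i.e., h = d_k), then the partition has multiplicity: there exists j ∈ J with j ≠ k and d_j = d_k. -/

import Mathlib

/-!
Let `φ : F_n → ℤ/h` send every generator to `1`. The number `h` divides the period of `H` if and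
only if `H ≤ ker φ` (`dvd_schreierPeriod_iff`): the period is the gcd of the lengths of the
positive words lying in `H`, and modulo the normal core of `H`, of finite index `N`, an inverse
generator `a⁻¹` can be replaced by the positive word `a ^ (N - 1)`.

Compose `φ` with a faithful character of `ℤ/h` to get `χ : F_n → ℂ`, and average `χ` over a finite
quotient of `F_n` through which `χ` and all the cosets factor. The average of `χ` over `F_n`
vanishes, as does the average over a coset of `H_i` unless `H_i ≤ ker φ`, while the average over
`H_k α_k` is nonzero because `χ` is constant there. Hence some `j ≠ k` satisfies `H_j ≤ ker φ`
(`exists_ne_le_ker`), that is, `h ∣ h_j`, and the choice of `h` gives `h_j = h`. Finally `h`, the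
index of `ker φ`, divides `d_j ≤ d_k = h`, so `d_j = d_k`.
-/


attribute [local instance] Classical.propDecidable

noncomputable section

/-- The set of right cosets `Hg` of a subgroup `H` of `G`. -/
abbrev RightCosets {G : Type*} [Group G] (H : Subgroup G) : Type _ :=
  Quotient (QuotientGroup.rightRel H)

/-- The right coset `Hg`, as an element of the right coset space. -/
def rcoset {G : Type*} [Group G] (H : Subgroup G) (g : G) : RightCosets H :=
  Quotient.mk'' g

/-- Right multiplication by `a` descends to the right coset space. -/
def cosetMul {G : Type*} [Group G] (H : Subgroup G) (a : G) :
    RightCosets H → RightCosets H :=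
  Quotient.map' (· * a) (fun x y hxy => by
    rw [QuotientGroup.rightRel_apply] at hxy ⊢
    simpa [mul_inv_rev, mul_assoc] using hxy)

noncomputable instance rightCosetsFintype {G : Type*} [Group G] (H : Subgroup G)
    [H.FiniteIndex] : Fintype (RightCosets H) :=
  have : Finite (G ⧸ H) := H.finite_quotient_of_finiteIndex
  have : Finite (RightCosets H) :=
    Finite.of_equiv _ (QuotientGroup.quotientRightRelEquivQuotientLeftRel H).symm
  Fintype.ofFinite _

/-- The transition matrix of the Schreier graph of a subgroup `H` of the free group `F_n`:
rows and columns are indexed by the right cosets of `H`, and the `(x, y)` entry is the number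
of generators `a_i` with `x · a_i = y`. -/
def schreierMatrix {n : ℕ} (H : Subgroup (FreeGroup (Fin n))) :
    Matrix (RightCosets H) (RightCosets H) ℕ :=
  Matrix.of fun x y => Nat.card {i : Fin n // cosetMul H (FreeGroup.of i) x = y}

/-- The gcd of a set of natural numbers: the natural generator of the ideal of `ℤ`
generated by the set. -/
def setGcd (S : Set ℕ) : ℕ :=
  (Submodule.IsPrincipal.generator (Ideal.span ((fun m : ℕ => (m : ℤ)) '' S))).natAbs

/-- The period of the transition matrix of the Schreier graph of `H`: the gcd of all `m ≥ 1`
such that the `(H, H)` entry of `A ^ m` is positive. -/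
def schreierPeriod {n : ℕ} (H : Subgroup (FreeGroup (Fin n))) [H.FiniteIndex] : ℕ :=
  setGcd {m : ℕ | 1 ≤ m ∧ 0 < (schreierMatrix H ^ m) (rcoset H 1) (rcoset H 1)}

/-- The right coset `Hg`, as a subset of `G`. -/
def rightCosetSet {G : Type*} [Group G] (H : Subgroup G) (g : G) : Set G :=
  {x : G | x * g⁻¹ ∈ H}

/-- `{H_i α_i}` is a coset partition: the right cosets `H_i α_i` are pairwise disjoint and
their union is the whole group. -/
def IsCosetPartition {G : Type*} [Group G] {ι : Type*}
    (H : ι → Subgroup G) (α : ι → G) : Prop :=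
  (∀ x : G, ∃ i, x ∈ rightCosetSet (H i) (α i)) ∧
    Pairwise fun i j => Disjoint (rightCosetSet (H i) (α i)) (rightCosetSet (H j) (α j))

/-- The element of the free group associated to a positive word `w` of length `k`. -/
def wordProd {n k : ℕ} (w : Fin k → Fin n) : FreeGroup (Fin n) :=
  (List.ofFn fun j => FreeGroup.of (w j)).prod

/-- The number of positive words of length `k` whose associated element lies in `Hα`. -/
def cosetCount {n : ℕ} (H : Subgroup (FreeGroup (Fin n))) (α : FreeGroup (Fin n))
    (k : ℕ) : ℕ :=
  Nat.card {w : Fin k → Fin n // wordProd w ∈ rightCosetSet H α}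

/-- The generating function of the coset `Hα`. -/
def genFun {n : ℕ} (H : Subgroup (FreeGroup (Fin n))) (α : FreeGroup (Fin n)) (z : ℂ) : ℂ :=
  ∑' k : ℕ, (cosetCount H α k : ℂ) * z ^ k

end

noncomputable section

/-- The transition matrix, regarded as a complex matrix. -/
def schreierMatrixC {n : ℕ} (H : Subgroup (FreeGroup (Fin n))) :
    Matrix (RightCosets H) (RightCosets H) ℂ :=
  (schreierMatrix H).map (Nat.cast : ℕ → ℂ)

/-- The polynomial `q(z) = det (I - z A) ∈ ℂ[z]`, for `A` the transition matrix of `H`. -/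
def detPoly {n : ℕ} (H : Subgroup (FreeGroup (Fin n))) [H.FiniteIndex] : Polynomial ℂ :=
  Matrix.det
    ((1 : Matrix (RightCosets H) (RightCosets H) (Polynomial ℂ)) -
      (Polynomial.X : Polynomial ℂ) • (schreierMatrix H).map (fun m : ℕ => (Polynomial.C (m : ℂ))))

/-- The power series `f_{xy}(z) = ∑_k (A^k)(x,y) z^k`. -/
def pathSeries {n : ℕ} (H : Subgroup (FreeGroup (Fin n))) [H.FiniteIndex]
    (x y : RightCosets H) (z : ℂ) : ℂ :=
  ∑' k : ℕ, (((schreierMatrix H ^ k) x y : ℕ) : ℂ) * z ^ k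

/-- The residue class `dℤ + r`, as a subset of `ℤ`. -/
def residueClass (d : ℕ) (r : ℤ) : Set ℤ :=
  {x : ℤ | (d : ℤ) ∣ x - r}

end
/-! ### The period and the length homomorphism modulo `h` -/

/-- The length homomorphism modulo `h`: every generator is sent to `1 ∈ ℤ/h`. -/
def lengthMod (n h : ℕ) : FreeGroup (Fin n) →* Multiplicative (ZMod h) :=
  FreeGroup.lift fun _ => Multiplicative.ofAdd 1

/-- The positive word spelled by a list of generators. -/
def posWord {n : ℕ} (l : List (Fin n)) : FreeGroup (Fin n) :=
  (l.map FreeGroup.of).prod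

lemma lengthMod_posWord {n : ℕ} (h : ℕ) (l : List (Fin n)) :
    lengthMod n h (posWord l) = Multiplicative.ofAdd (l.length : ZMod h) := by
  induction l with
  | nil => simp [posWord]
  | cons a l ih =>
    have e : posWord (a :: l) = FreeGroup.of a * posWord l := by simp [posWord]
    rw [e, map_mul, ih, lengthMod, FreeGroup.lift_apply_of, ← ofAdd_add, List.length_cons,
      Nat.cast_succ, add_comm]

lemma lengthMod_posWord_eq_one {n : ℕ} (h : ℕ) (l : List (Fin n)) :
    lengthMod n h (posWord l) = 1 ↔ h ∣ l.length := by
  rw [lengthMod_posWord, ofAdd_eq_one, ZMod.natCast_eq_zero_iff]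

lemma dvd_setGcd_iff (S : Set ℕ) (k : ℕ) : k ∣ setGcd S ↔ ∀ m ∈ S, k ∣ m := by
  have key : (k : ℤ) ∣ Submodule.IsPrincipal.generator
      (Ideal.span ((fun m : ℕ => (m : ℤ)) '' S)) ↔
      Ideal.span ((fun m : ℕ => (m : ℤ)) '' S) ≤ Ideal.span {(k : ℤ)} := by
    rw [← Ideal.span_singleton_le_span_singleton, Ideal.span_singleton_generator]
  rw [setGcd, ← Int.natCast_dvd, key, Ideal.span_le]
  constructor
  · intro hS m hm
    exact Int.natCast_dvd_natCast.1 (Ideal.mem_span_singleton.1 (hS ⟨m, hm, rfl⟩))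
  · rintro hS _ ⟨m, hm, rfl⟩
    exact Ideal.mem_span_singleton.2 (Int.natCast_dvd_natCast.2 (hS m hm))

lemma rcoset_eq_iff {G : Type*} [Group G] (H : Subgroup G) (x y : G) :
    rcoset H x = rcoset H y ↔ y * x⁻¹ ∈ H := by
  rw [rcoset, rcoset, Quotient.eq'', QuotientGroup.rightRel_apply]

lemma schreierMatrix_pos_iff {n : ℕ} (H : Subgroup (FreeGroup (Fin n))) (x y : RightCosets H) :
    0 < schreierMatrix H x y ↔ ∃ i, cosetMul H (FreeGroup.of i) x = y := by
  simp only [schreierMatrix, Matrix.of_apply]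
  rw [Nat.card_pos_iff]
  constructor
  · rintro ⟨⟨i, hi⟩, -⟩
    exact ⟨i, hi⟩
  · rintro ⟨i, hi⟩
    exact ⟨⟨i, hi⟩, inferInstance⟩

lemma schreierMatrix_pow_pos_iff {n : ℕ} (H : Subgroup (FreeGroup (Fin n))) [H.FiniteIndex]
    (m : ℕ) (g : FreeGroup (Fin n)) (y : RightCosets H) :
    0 < (schreierMatrix H ^ m) (rcoset H g) y ↔
      ∃ l : List (Fin n), l.length = m ∧ rcoset H (g * posWord l) = y := by
  induction m generalizing g with
  | zero =>
    rw [pow_zero, Matrix.one_apply]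
    constructor
    · intro hp
      refine ⟨[], rfl, ?_⟩
      by_contra hne
      rw [if_neg (by simpa [posWord] using hne)] at hp
      exact lt_irrefl _ hp
    · rintro ⟨l, hl, hy⟩
      rw [List.length_eq_zero_iff] at hl
      subst hl
      rw [if_pos (by simpa [posWord] using hy)]
      exact one_pos
  | succ m ih =>
    rw [pow_succ', Matrix.mul_apply, Finset.sum_pos_iff]
    constructor
    · rintro ⟨z, -, hz⟩
      obtain ⟨i, rfl⟩ := (schreierMatrix_pos_iff H _ _).1 (Nat.pos_of_mul_pos_right hz)
      have h2 := Nat.pos_of_mul_pos_left hz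
      obtain ⟨l, hl, hy⟩ := (ih (g * FreeGroup.of i)).1 h2
      refine ⟨i :: l, by simp [hl], ?_⟩
      rw [← hy]
      simp [posWord, mul_assoc]
    · rintro ⟨l, hl, hy⟩
      obtain ⟨i, l, rfl⟩ : ∃ i l', l = i :: l' := by
        cases l with
        | nil => simp at hl
        | cons i l => exact ⟨i, l, rfl⟩
      refine ⟨rcoset H (g * FreeGroup.of i), Finset.mem_univ _, Nat.mul_pos ?_ ?_⟩
      · exact (schreierMatrix_pos_iff H _ _).2 ⟨i, rfl⟩
      · refine (ih _).2 ⟨l, by simpa using hl, ?_⟩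
        rw [← hy]
        simp [posWord, mul_assoc]

lemma dvd_schreierPeriod_iff_posWord {n : ℕ} (H : Subgroup (FreeGroup (Fin n))) [H.FiniteIndex]
    (h : ℕ) : h ∣ schreierPeriod H ↔ ∀ l : List (Fin n), posWord l ∈ H → h ∣ l.length := by
  rw [schreierPeriod, dvd_setGcd_iff]
  constructor
  · intro hS l hl
    rcases Nat.eq_zero_or_pos l.length with h0 | h0
    · rw [h0]
      exact dvd_zero h
    · refine hS _ ⟨h0, (schreierMatrix_pow_pos_iff H _ _ _).2 ⟨l, rfl, ?_⟩⟩
      rw [rcoset_eq_iff]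
      simpa using hl
  · rintro hS m ⟨-, hm⟩
    obtain ⟨l, rfl, hl⟩ := (schreierMatrix_pow_pos_iff H _ _ _).1 hm
    rw [rcoset_eq_iff] at hl
    exact hS l (by simpa using hl)

/-- Every element is congruent, modulo the normal core of `H`, to a positive word of the same
length modulo `h`, as soon as `h` divides the period of `H`. -/
lemma exists_posWord {n : ℕ} (H : Subgroup (FreeGroup (Fin n))) [H.FiniteIndex]
    (h : ℕ) (hH : ∀ l : List (Fin n), posWord l ∈ H → h ∣ l.length) (g : FreeGroup (Fin n)) :
    ∃ l : List (Fin n), (g : FreeGroup (Fin n) ⧸ H.normalCore) = posWord l ∧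
      lengthMod n h g = lengthMod n h (posWord l) := by
  induction g using FreeGroup.induction_on with
  | C1 => exact ⟨[], by simp [posWord], by simp [posWord]⟩
  | of a => exact ⟨[a], by simp [posWord], by simp [posWord]⟩
  | inv_of a _ =>
    have hN : H.normalCore.index ≠ 0 := Subgroup.FiniteIndex.index_ne_zero
    obtain ⟨N, hN⟩ := Nat.exists_eq_succ_of_ne_zero hN
    have hmem : FreeGroup.of a ^ (N + 1) ∈ H.normalCore := by
      have := H.normalCore.pow_index_mem (FreeGroup.of a)
      rwa [hN] at this
    have e : ∀ m, posWord (List.replicate m a) = FreeGroup.of a ^ m := by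
      intro m
      simp [posWord]
    have h1 : lengthMod n h (FreeGroup.of a ^ (N + 1)) = 1 := by
      rw [← e, lengthMod_posWord_eq_one]
      refine hH _ ?_
      rw [e]
      exact H.normalCore_le hmem
    refine ⟨List.replicate N a, ?_, ?_⟩
    · rw [e, QuotientGroup.eq, inv_inv, ← pow_succ']
      exact hmem
    · rw [e, map_inv, inv_eq_iff_mul_eq_one, ← map_mul, ← pow_succ', h1]
  | mul x y hx hy =>
    obtain ⟨l, hl, hl'⟩ := hx
    obtain ⟨r, hr, hr'⟩ := hy
    have e : posWord (l ++ r) = posWord l * posWord r := by simp [posWord]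
    refine ⟨l ++ r, ?_, ?_⟩
    · rw [e, QuotientGroup.mk_mul, QuotientGroup.mk_mul, hl, hr]
    · rw [e, map_mul, map_mul, hl', hr']

lemma dvd_schreierPeriod_iff {n : ℕ} (H : Subgroup (FreeGroup (Fin n))) [H.FiniteIndex]
    (h : ℕ) : h ∣ schreierPeriod H ↔ H ≤ (lengthMod n h).ker := by
  rw [dvd_schreierPeriod_iff_posWord]
  constructor
  · intro hH g hg
    obtain ⟨l, hl, hl'⟩ := exists_posWord H h hH g
    rw [MonoidHom.mem_ker, hl', lengthMod_posWord_eq_one]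
    apply hH
    have h1 := H.normalCore_le (QuotientGroup.eq.1 hl)
    exact (H.mul_mem_cancel_left (H.inv_mem hg)).1 h1
  · intro hH l hl
    exact (lengthMod_posWord_eq_one h l).1 (hH hl)

/-! ### Averaging a character over a coset partition -/

/-- The set `Hα` is a union of cosets of any normal subgroup contained in `H`. -/
lemma mem_rightCosetSet_congr {G : Type*} [Group G] {H K : Subgroup G} [K.Normal] (hK : K ≤ H)
    (α : G) {x y : G} (hxy : (x : G ⧸ K) = y) :
    x ∈ rightCosetSet H α ↔ y ∈ rightCosetSet H α := by
  have h1 : x * y⁻¹ ∈ H := by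
    apply hK
    have h2 : x⁻¹ * y ∈ K := QuotientGroup.eq.1 hxy
    have h3 := ‹K.Normal›.conj_mem _ (K.inv_mem h2) y
    simpa [mul_assoc] using h3
  have h4 : x * α⁻¹ = (x * y⁻¹) * (y * α⁻¹) := by group
  change x * α⁻¹ ∈ H ↔ y * α⁻¹ ∈ H
  rw [h4]
  exact H.mul_mem_cancel_left h1

/-- In a finite coset partition, a subgroup `H k` contained in the kernel of a nontrivial character
of finite order is not the only one. -/
lemma exists_ne_le_ker {G ι : Type*} [Group G] [Fintype ι] (H : ι → Subgroup G)
    [∀ i, (H i).FiniteIndex] (α : ι → G) (hpart : IsCosetPartition H α)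
    (χ : G →* ℂ) [χ.ker.FiniteIndex] (g₀ : G) (hg₀ : χ g₀ ≠ 1) (k : ι) (hk : H k ≤ χ.ker) :
    ∃ j, j ≠ k ∧ H j ≤ χ.ker := by
  by_contra! hcon
  -- A normal subgroup of finite index modulo which `χ` and all the cosets are well defined.
  let K : Subgroup G := (⨅ i, (H i).normalCore) ⊓ χ.ker
  have hKn : (⨅ i, (H i).normalCore).Normal := Subgroup.normal_iInf_normal fun i => inferInstance
  have hKf : (⨅ i, (H i).normalCore).FiniteIndex :=
    Subgroup.finiteIndex_iInf fun i => inferInstance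
  have : K.Normal := inferInstanceAs ((_ ⊓ _ : Subgroup G).Normal)
  have : K.FiniteIndex := inferInstanceAs ((_ ⊓ _ : Subgroup G).FiniteIndex)
  have hKH : ∀ i, K ≤ H i := fun i =>
    inf_le_left.trans ((iInf_le _ i).trans (H i).normalCore_le)
  have hKχ : K ≤ χ.ker := inf_le_right
  have : Fintype (G ⧸ K) := Fintype.ofFinite _
  have hχ : ∀ x y : G, (x : G ⧸ K) = y → χ x = χ y := by
    intro x y hxy
    have h1 : χ (x⁻¹ * y) = 1 := hKχ (QuotientGroup.eq.1 hxy)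
    calc χ x = χ x * χ (x⁻¹ * y) := by rw [h1, mul_one]
      _ = χ y := by rw [← map_mul, mul_inv_cancel_left]
  have hout : ∀ (g : G) (q : G ⧸ K),
      (((g : G ⧸ K) * q).out : G ⧸ K) = ((g * q.out : G) : G ⧸ K) := by
    intro g q
    rw [QuotientGroup.out_eq', QuotientGroup.mk_mul, QuotientGroup.out_eq']
  let S : ι → ℂ := fun i =>
    ∑ q : G ⧸ K, if q.out ∈ rightCosetSet (H i) (α i) then χ q.out else 0
  have hS0 : ∀ i, ¬ H i ≤ χ.ker → S i = 0 := by
    intro i hi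
    obtain ⟨g, hg, hgχ⟩ := SetLike.not_le_iff_exists.1 hi
    have h1 : S i = χ g * S i := by
      -- Translate the summation variable by `g`, which preserves `H i * α i`.
      calc S i = ∑ q : G ⧸ K, if ((g : G ⧸ K) * q).out ∈ rightCosetSet (H i) (α i)
              then χ ((g : G ⧸ K) * q).out else 0 :=
            (Equiv.sum_comp (Equiv.mulLeft (g : G ⧸ K)) fun q =>
              if q.out ∈ rightCosetSet (H i) (α i) then χ q.out else 0).symm
        _ = χ g * S i := by
            rw [Finset.mul_sum]
            refine Finset.sum_congr rfl fun q _ => ?_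
            have h2 : g * q.out ∈ rightCosetSet (H i) (α i) ↔
                q.out ∈ rightCosetSet (H i) (α i) := by
              change g * q.out * (α i)⁻¹ ∈ H i ↔ q.out * (α i)⁻¹ ∈ H i
              rw [mul_assoc]
              exact (H i).mul_mem_cancel_left hg
            rw [hχ _ _ (hout g q), map_mul]
            simp only [mem_rightCosetSet_congr (hKH i) (α i) (hout g q), h2, mul_ite, mul_zero]
    by_contra hne
    exact hgχ (mul_right_cancel₀ hne (by rw [one_mul]; exact h1.symm))
  have htot : ∑ q : G ⧸ K, χ q.out = 0 := by
    have h1 : ∑ q : G ⧸ K, χ q.out = χ g₀ * ∑ q : G ⧸ K, χ q.out := by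
      calc ∑ q : G ⧸ K, χ q.out = ∑ q : G ⧸ K, χ ((g₀ : G ⧸ K) * q).out :=
            (Equiv.sum_comp (Equiv.mulLeft (g₀ : G ⧸ K)) fun q => χ q.out).symm
        _ = χ g₀ * ∑ q : G ⧸ K, χ q.out := by
            rw [Finset.mul_sum]
            refine Finset.sum_congr rfl fun q _ => ?_
            rw [hχ _ _ (hout g₀ q), map_mul]
    by_contra hne
    exact hg₀ (mul_right_cancel₀ hne (by rw [one_mul]; exact h1.symm))
  have hsum : ∑ i, S i = ∑ q : G ⧸ K, χ q.out := by
    rw [Finset.sum_comm]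
    refine Finset.sum_congr rfl fun q _ => ?_
    obtain ⟨i, hi⟩ := hpart.1 q.out
    rw [Finset.sum_eq_single i]
    · rw [if_pos hi]
    · intro j _ hji
      exact if_neg fun hj => Set.disjoint_left.1 (hpart.2 hji) hj hi
    · intro hni
      exact absurd (Finset.mem_univ i) hni
  have hSk : S k = 0 := by
    rw [← Finset.sum_eq_single k (fun j _ hj => hS0 j (hcon j hj))
      (fun hni => absurd (Finset.mem_univ k) hni), hsum, htot]
  have hαk : χ (α k) ≠ 0 := by
    intro h0
    have h1 : χ (α k) * χ (α k)⁻¹ = 1 := by rw [← map_mul, mul_inv_cancel, map_one]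
    rw [h0, zero_mul] at h1
    exact zero_ne_one h1
  have hSk' : S k = (Finset.univ.filter fun q : G ⧸ K =>
      q.out ∈ rightCosetSet (H k) (α k)).card * χ (α k) := by
    rw [← nsmul_eq_mul, ← Finset.sum_const, Finset.sum_filter]
    refine Finset.sum_congr rfl fun q _ => ?_
    split_ifs with hq
    · have h1 : χ (q.out * (α k)⁻¹) = 1 := hk hq
      calc χ q.out = χ (q.out * (α k)⁻¹) * χ (α k) := by
            rw [← map_mul, inv_mul_cancel_right]
        _ = χ (α k) := by rw [h1, one_mul]
    · rfl
  rw [hSk'] at hSk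
  rcases mul_eq_zero.1 hSk with h0 | h0
  · rw [Nat.cast_eq_zero, Finset.card_eq_zero] at h0
    have h1 : ((α k : G) : G ⧸ K) ∈ Finset.univ.filter fun q : G ⧸ K =>
        q.out ∈ rightCosetSet (H k) (α k) := by
      rw [Finset.mem_filter]
      refine ⟨Finset.mem_univ _, ?_⟩
      rw [mem_rightCosetSet_congr (hKH k) (α k) (QuotientGroup.out_eq' _)]
      change α k * (α k)⁻¹ ∈ H k
      rw [mul_inv_cancel]
      exact (H k).one_mem
    rw [h0] at h1
    exact Finset.notMem_empty _ h1
  · exact hαk h0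

/-- **Theorem.** Let `{H_i α_i}` be a coset partition of `F_n` with indices `1 < d_1 ≤ … ≤ d_s`
and periods `h_i`. Let `h > 1` be either the maximum of the periods, or a period which does not
properly divide any other period. Let `J = {j | h_j = h}` and let `k ∈ J` with `d_k` maximal
among `{d_j | j ∈ J}`. If the period of `A_k` equals `d_k`, then there is `j ∈ J`, `j ≠ k`,
with `d_j = d_k`. -/
theorem multiplicity_of_period_eq_index (n s : ℕ) (hn : 1 ≤ n)
    (H : Fin s → Subgroup (FreeGroup (Fin n))) (α : Fin s → FreeGroup (Fin n))
    [inst : ∀ i, (H i).FiniteIndex]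
    (d : Fin s → ℕ) (hindex : ∀ i, (H i).index = d i)
    (hd1 : ∀ i, 1 < d i) (hmono : Monotone d)
    (hpart : IsCosetPartition H α)
    (h : ℕ) (hh : 1 < h)
    (hcase : ((∃ i, schreierPeriod (H i) = h) ∧ ∀ i, schreierPeriod (H i) ≤ h) ∨
      ((∃ i, schreierPeriod (H i) = h) ∧
        ∀ i, h ∣ schreierPeriod (H i) → schreierPeriod (H i) = h))
    (k : Fin s) (hkJ : schreierPeriod (H k) = h)
    (hkmax : ∀ j, schreierPeriod (H j) = h → d j ≤ d k)
    (hper : schreierPeriod (H k) = d k) :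
    ∃ j, schreierPeriod (H j) = h ∧ j ≠ k ∧ d j = d k := by
  have hne : NeZero h := ⟨by omega⟩
  let χ : FreeGroup (Fin n) →* ℂ :=
    (ZMod.stdAddChar (N := h)).toMonoidHom.comp (lengthMod n h)
  have hker : χ.ker = (lengthMod n h).ker := by
    ext g
    rw [MonoidHom.mem_ker, MonoidHom.mem_ker]
    change ZMod.stdAddChar (Multiplicative.toAdd (lengthMod n h g)) = 1 ↔ _
    rw [← AddChar.map_zero_eq_one (ZMod.stdAddChar (N := h)),
      ZMod.injective_stdAddChar.eq_iff, toAdd_eq_zero]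
  have hfin : Finite (Multiplicative (ZMod h)) := inferInstanceAs (Finite (ZMod h))
  have hfi : χ.ker.FiniteIndex := by
    rw [hker]
    infer_instance
  have hof : lengthMod n h (FreeGroup.of ⟨0, hn⟩) = Multiplicative.ofAdd 1 :=
    FreeGroup.lift_apply_of
  have hg₀ : χ (FreeGroup.of ⟨0, hn⟩) ≠ 1 := by
    have : Fact (1 < h) := ⟨hh⟩
    rw [Ne, ← MonoidHom.mem_ker, hker, MonoidHom.mem_ker, hof, ofAdd_eq_one]
    exact one_ne_zero
  obtain ⟨j, hjk, hj⟩ := exists_ne_le_ker H α hpart χ _ hg₀ k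
    (by rw [hker, ← dvd_schreierPeriod_iff, hkJ])
  rw [hker] at hj
  have hdvd : h ∣ schreierPeriod (H j) := (dvd_schreierPeriod_iff _ _).2 hj
  have hsurj : Function.Surjective (lengthMod n h) := by
    intro z
    refine ⟨FreeGroup.of ⟨0, hn⟩ ^ (Multiplicative.toAdd z).val, ?_⟩
    rw [map_pow, hof, ← ofAdd_nsmul, nsmul_one, ZMod.natCast_zmod_val, ofAdd_toAdd]
  have hindexker : (lengthMod n h).ker.index = h := by
    rw [Subgroup.index_ker, MonoidHom.range_eq_top.2 hsurj, Subgroup.card_top]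
    exact Nat.card_zmod h
  -- `H j` contains a nonempty positive word, a power of a generator.
  have hpos : 0 < schreierPeriod (H j) := by
    rw [Nat.pos_iff_ne_zero]
    intro h0
    have h1 := (dvd_schreierPeriod_iff_posWord (H j) 0).1 (by rw [h0])
    have hN : (H j).normalCore.index ≠ 0 := Subgroup.FiniteIndex.index_ne_zero
    have h2 := h1 (List.replicate (H j).normalCore.index ⟨0, hn⟩) (by
      have := (H j).normalCore_le ((H j).normalCore.pow_index_mem (FreeGroup.of ⟨0, hn⟩))
      simpa [posWord] using this)
    rw [List.length_replicate, zero_dvd_iff] at h2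
    exact hN h2
  have hper_j : schreierPeriod (H j) = h := by
    rcases hcase with ⟨-, hmax⟩ | ⟨-, hdiv⟩
    · exact le_antisymm (hmax j) (Nat.le_of_dvd hpos hdvd)
    · exact hdiv j hdvd
  refine ⟨j, hper_j, hjk, le_antisymm (hkmax j hper_j) ?_⟩
  have hd : h ∣ d j := by
    rw [← hindex j]
    have := Subgroup.index_dvd_of_le hj
    rwa [hindexker] at this
  rw [← hper, hkJ]
  exact Nat.le_of_dvd (lt_trans one_pos (hd1 j)) hd
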